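/- There exists a universal constant K > 0 with the following property (utility of task-weighted noisy gradient descent in the strongly convex case, Theorem 4(b)). Let d, m ≥ 1 and n₁,…,n_m ≥ 1 be integers, Γ > 0, λ > 0, and let C ⊆ ℝ^d be a nonempty compact convex set. For each i ∈ {1,…,m} and j ∈ {1,…,n_i}, let ℓ_{ij} : ℝ^d → ℝ be differentiable, λ-strongly convex, and Γ-Lipschitz on C; set L_i = ∑_{j=1}^{n_i} ℓ_{ij} and let θ*_i be the minimizer of L_i over C. Let ω₁,…,ω_m > 0 be task weights and set T = ⌈(2/d)·(∑_{i=1}^m n_i)/(∑_{i=1}^m 1/(ω_i² n_i))⌉. On a probability space, let (ξ_i⁽ᵗ⁾)_{i ∈ [m], t ∈ [T]} be independent random vectors in ℝ^d, each with the standard Gaussian law (d independent N(0,1) coordinates). For each i, let θ_i⁽⁰⁾ ∈ C be deterministic and define θ_i⁽ᵗ⁾ = Π_C( θ_i⁽ᵗ⁻¹⁾ − η_i⁽ᵗ⁾( ω_i ∇L_i(θ_i⁽ᵗ⁻¹⁾) + Γ√(T/2)·ξ_i⁽ᵗ⁾ ) ) with step sizes η_i⁽ᵗ⁾ = 1/(ω_i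 n_i λ t). Then ∑_{i=1}^m E[L_i(θ_i⁽ᵀ⁾)] − ∑_{i=1}^m L_i(θ*_i) ≤ K · (Γ²/λ) · d · (1 + log T) · ∑_{i=1}^m 1/(ω_i² n_i). -/

import Mathlib

open MeasureTheory ProbabilityTheory

/-!
With `wᵢ` absorbed into the step size, each task runs projected gradient descent on the
`nᵢ λ`-strongly convex, `nᵢ Γ`-Lipschitz loss `f = Lᵢ`, with Gaussian noise of second moment
`σ² = Γ² T d / (2 wᵢ²)`; write `a = nᵢ λ` and `B = nᵢ Γ`. Since the projection is nonexpansive,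
strong convexity with the step size `1 / (a (t + 1))` gives, against any comparator `y ∈ C`,
`f (x t) - f y ≤ a t / 2 ‖x t - y‖² - a (t + 1) / 2 ‖x (t + 1) - y‖²
  + (B² + ‖ν t‖²) / (a (t + 1)) + ⟪ν t, y - x t⟫`.
The noise is independent of the past, so the last term has mean zero when `y` is constant or an
earlier iterate `x s`, and in expectation the squared distances telescope. Comparing with every
`x s`, as Shamir and Zhang do, bounds the increments of the suffix means of `E f (x t)`, and their
sum turns a bound on the average into one on the last iterate, of order
`(B² + σ²) / a * (1 + log T) / T`. Summed over tasks, the `B²` terms contribute `∑ nᵢ / T` and the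
`σ²` terms `d / 2 * ∑ 1 / (wᵢ² nᵢ)`, up to the same factor `Γ² / λ * (1 + log T)`; the choice of `T`
makes the first sum at most the second.
-/

/-- The average of the entries `a s, …, a T`, the potential in the Shamir–Zhang analysis of the
last iterate: it interpolates between the full average (`s = 0`) and `a T` (`s = T`). -/
noncomputable def suffixMean (a : ℕ → ℝ) (T s : ℕ) : ℝ :=
  (∑ t ∈ Finset.Ico s (T + 1), a t) / (T + 1 - s)

lemma suffixMean_self (a : ℕ → ℝ) (T : ℕ) : suffixMean a T T = a T := by
  simp [suffixMean]

lemma sum_Ico_sub_const (a : ℕ → ℝ) (b : ℝ) {s T : ℕ} (hs : s ≤ T) :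
    ∑ t ∈ Finset.Ico s (T + 1), (a t - b) = (T + 1 - s) * (suffixMean a T s - b) := by
  have hsT : (s : ℝ) ≤ T := by exact_mod_cast hs
  have hne : (T + 1 - s : ℝ) ≠ 0 := by linarith
  rw [Finset.sum_sub_distrib, Finset.sum_const, Nat.card_Ico, nsmul_eq_mul,
    Nat.cast_sub (by lia), suffixMean, mul_sub, mul_div_cancel₀ _ hne]
  push_cast
  ring

lemma suffixMean_succ_sub (a : ℕ → ℝ) {s T : ℕ} (hs : s < T) :
    suffixMean a T (s + 1) - suffixMean a T s
      = (∑ t ∈ Finset.Ico s (T + 1), (a t - a s)) / ((T - s) * (T + 1 - s)) := by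
  have hsT : (s : ℝ) < T := by exact_mod_cast hs
  have h₀ : (T - s : ℝ) ≠ 0 := by linarith
  have h₁ : (T + 1 - s : ℝ) ≠ 0 := by linarith
  have htail : ∑ t ∈ Finset.Ico (s + 1) (T + 1), (a t - a s)
      = ∑ t ∈ Finset.Ico s (T + 1), (a t - a s) := by
    rw [Finset.sum_eq_sum_Ico_succ_bot (by lia : s < T + 1), sub_self, zero_add]
  rw [sum_Ico_sub_const a _ (by lia)] at htail
  rw [sum_Ico_sub_const a _ hs.le] at htail ⊢
  push_cast at htail ⊢
  field_simp
  linear_combination htail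

lemma sum_Ico_one_div_succ_le {s T : ℕ} (hs : s ≤ T) :
    ∑ t ∈ Finset.Ico s (T + 1), 1 / ((t : ℝ) + 1) ≤ (T + 1 - s) / (s + 1) := by
  calc ∑ t ∈ Finset.Ico s (T + 1), 1 / ((t : ℝ) + 1)
      ≤ ∑ t ∈ Finset.Ico s (T + 1), 1 / ((s : ℝ) + 1) := by
        gcongr with t ht
        exact (Finset.mem_Ico.1 ht).1
    _ = (T + 1 - s) / (s + 1) := by
        rw [Finset.sum_const, Nat.card_Ico, nsmul_eq_mul, Nat.cast_sub (by lia)]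
        push_cast
        ring

lemma sum_range_one_div_succ_le (T : ℕ) :
    ∑ t ∈ Finset.range T, 1 / ((t : ℝ) + 1) ≤ 1 + Real.log T := by
  simpa [harmonic] using harmonic_le_one_add_log T

lemma sum_range_one_div_sub_mul_succ (T : ℕ) :
    ∑ t ∈ Finset.range T, 1 / (((T : ℝ) - t) * (t + 1))
      = 2 / (T + 1) * ∑ t ∈ Finset.range T, 1 / ((t : ℝ) + 1) := by
  have hreflect : ∑ t ∈ Finset.range T, 1 / ((T : ℝ) - t)
      = ∑ t ∈ Finset.range T, 1 / ((t : ℝ) + 1) := by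
    rw [← Finset.sum_range_reflect]
    refine Finset.sum_congr rfl fun t ht => ?_
    have htT := Finset.mem_range.1 ht
    rw [Nat.cast_sub (by lia), Nat.cast_sub (by lia)]
    push_cast
    ring
  have hpartial : ∀ t ∈ Finset.range T, 1 / (((T : ℝ) - t) * (t + 1))
      = (1 / ((T : ℝ) - t) + 1 / ((t : ℝ) + 1)) / (T + 1) := by
    intro t ht
    have htT : (t : ℝ) < T := by exact_mod_cast Finset.mem_range.1 ht
    have hne : (T : ℝ) - t ≠ 0 := by linarith
    field_simp
    ring
  rw [Finset.sum_congr rfl hpartial, ← Finset.sum_div, Finset.sum_add_distrib, hreflect]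
  ring

lemma sub_suffixMean_zero_le {a : ℕ → ℝ} {A : ℝ} (hA : 0 ≤ A) {T : ℕ}
    (h : ∀ s < T, ∑ t ∈ Finset.Ico s (T + 1), (a t - a s)
      ≤ A * ∑ t ∈ Finset.Ico s (T + 1), 1 / ((t : ℝ) + 1)) :
    a T - suffixMean a T 0 ≤ 2 * A / (T + 1) * ∑ t ∈ Finset.range T, 1 / ((t : ℝ) + 1) := by
  have hincr : ∀ s ∈ Finset.range T, suffixMean a T (s + 1) - suffixMean a T s
      ≤ A * (1 / (((T : ℝ) - s) * (s + 1))) := by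
    intro s hs
    have hsT := Finset.mem_range.1 hs
    have hsT' : (s : ℝ) < T := by exact_mod_cast hsT
    have h₀ : (0 : ℝ) < T - s := by linarith
    have h₁ : (0 : ℝ) < T + 1 - s := by linarith
    rw [suffixMean_succ_sub a hsT]
    calc _ ≤ A * ((T + 1 - s) / (s + 1)) / ((T - s) * (T + 1 - s)) := by
          gcongr
          exact (h s hsT).trans (by gcongr; exact sum_Ico_one_div_succ_le hsT.le)
      _ = A * (1 / (((T : ℝ) - s) * (s + 1))) := by field_simp
  calc a T - suffixMean a T 0
      = ∑ s ∈ Finset.range T, (suffixMean a T (s + 1) - suffixMean a T s) := by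
        rw [Finset.sum_range_sub, suffixMean_self]
    _ ≤ ∑ s ∈ Finset.range T, A * (1 / (((T : ℝ) - s) * (s + 1))) := Finset.sum_le_sum hincr
    _ = 2 * A / (T + 1) * ∑ t ∈ Finset.range T, 1 / ((t : ℝ) + 1) := by
        rw [← Finset.mul_sum, sum_range_one_div_sub_mul_succ]
        ring

lemma last_sub_le_of_sum_Ico_sub_le {a : ℕ → ℝ} {A c : ℝ} (hA : 0 ≤ A) {T : ℕ} (hT : 1 ≤ T)
    (h : ∀ s < T, ∑ t ∈ Finset.Ico s (T + 1), (a t - a s)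
      ≤ A * ∑ t ∈ Finset.Ico s (T + 1), 1 / ((t : ℝ) + 1))
    (hc : ∑ t ∈ Finset.Ico 0 (T + 1), (a t - c)
      ≤ A * ∑ t ∈ Finset.Ico 0 (T + 1), 1 / ((t : ℝ) + 1)) :
    a T - c ≤ 4 * A * (1 + Real.log T) / T := by
  set H : ℝ := ∑ t ∈ Finset.range T, 1 / ((t : ℝ) + 1) with hH
  have hlast := sub_suffixMean_zero_le hA h
  have hmean : suffixMean a T 0 - c ≤ A / (T + 1) * (H + 1) := by
    have hone : 1 / ((T : ℝ) + 1) ≤ 1 := div_le_one_of_le₀ (by simp) (by positivity)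
    have hle : ((T : ℝ) + 1) * (suffixMean a T 0 - c) ≤ A * (H + 1) := by
      rw [sum_Ico_sub_const a _ T.zero_le, ← Finset.range_eq_Ico, Finset.sum_range_succ,
        Nat.cast_zero, sub_zero] at hc
      exact hc.trans (by gcongr)
    rw [div_mul_eq_mul_div, le_div_iff₀ (by positivity)]
    linarith
  have hHlog : H ≤ 1 + Real.log T := sum_range_one_div_succ_le T
  have hlog : 0 ≤ Real.log T := Real.log_natCast_nonneg T
  calc a T - c ≤ A * (3 * H + 1) / (T + 1) := by
        linear_combination hlast + hmean
    _ ≤ A * (4 * (1 + Real.log T)) / T := by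
        gcongr <;> linarith
    _ = 4 * A * (1 + Real.log T) / T := by ring

lemma sum_Ico_le_of_step {e D : ℕ → ℝ} {a A : ℝ} {s T : ℕ} (hs : s ≤ T)
    (hstep : ∀ t, s ≤ t → t < T →
      e t ≤ a * t / 2 * D t - a * (t + 1) / 2 * D (t + 1) + A * (1 / ((t : ℝ) + 1)))
    (hlast : e T ≤ a * T / 2 * D T + A * (1 / ((T : ℝ) + 1))) :
    ∑ t ∈ Finset.Ico s (T + 1), e t
      ≤ a * s / 2 * D s + A * ∑ t ∈ Finset.Ico s (T + 1), 1 / ((t : ℝ) + 1) := by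
  have htelescope : ∑ t ∈ Finset.Ico s T, e t ≤ a * s / 2 * D s - a * T / 2 * D T
      + A * ∑ t ∈ Finset.Ico s T, 1 / ((t : ℝ) + 1) := by
    have hsum := Finset.sum_Ico_sub (fun t : ℕ => -(a * t / 2 * D t)) hs
    calc ∑ t ∈ Finset.Ico s T, e t
        ≤ ∑ t ∈ Finset.Ico s T, ((-(a * (t + 1 : ℕ) / 2 * D (t + 1)) - -(a * t / 2 * D t))
            + A * (1 / ((t : ℝ) + 1))) := by
          refine Finset.sum_le_sum fun t ht => ?_
          have hle := hstep t (Finset.mem_Ico.1 ht).1 (Finset.mem_Ico.1 ht).2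
          push_cast
          linarith
      _ = _ := by
          rw [Finset.sum_add_distrib, hsum, Finset.mul_sum]
          ring
  rw [Finset.sum_Ico_succ_top hs, Finset.sum_Ico_succ_top hs]
  linarith

lemma abs_sum_sub_sum_le {ι : Type*} {s : Finset ι} {f g : ι → ℝ} {b : ℝ}
    (h : ∀ i ∈ s, |f i - g i| ≤ b) : |∑ i ∈ s, f i - ∑ i ∈ s, g i| ≤ s.card * b := by
  rw [← Finset.sum_sub_distrib, ← nsmul_eq_mul]
  exact (Finset.abs_sum_le_sum_abs _ _).trans (Finset.sum_le_card_nsmul _ _ _ h)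

section ProjectedGradient

open Filter (Tendsto)
open scoped Topology

variable {E : Type*} [NormedAddCommGroup E] {C : Set E} {p : E → E}

/-- The map `p` is the metric projection onto `C`: `p x` is a point of `C` closest to `x`. -/
def IsMetricProj (C : Set E) (p : E → E) : Prop :=
  ∀ x, p x ∈ C ∧ ∀ y ∈ C, ‖x - p x‖ ≤ ‖x - y‖

lemma IsMetricProj.mem (hp : IsMetricProj C p) (x : E) : p x ∈ C := (hp x).1

variable [InnerProductSpace ℝ E]

lemma IsMetricProj.inner_sub_sub_nonpos (hp : IsMetricProj C p) (hC : Convex ℝ C) (x : E) {y : E}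
    (hy : y ∈ C) : inner ℝ (x - p x) (y - p x) ≤ 0 := by
  have : Nonempty C := ⟨⟨y, hy⟩⟩
  refine (norm_eq_iInf_iff_real_inner_le_zero hC (hp.mem x)).1 ?_ y hy
  refine le_antisymm (le_ciInf fun z => (hp x).2 z z.2) ?_
  exact ciInf_le (f := fun z : C => ‖x - z‖) ⟨0, by rintro _ ⟨z, rfl⟩; positivity⟩ ⟨p x, hp.mem x⟩

lemma IsMetricProj.lipschitzWith_one (hp : IsMetricProj C p) (hC : Convex ℝ C) :
    LipschitzWith 1 p := by
  refine LipschitzWith.mk_one fun x y => ?_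
  rw [dist_eq_norm, dist_eq_norm]
  have hx := hp.inner_sub_sub_nonpos hC x (hp.mem y)
  have hy := hp.inner_sub_sub_nonpos hC y (hp.mem x)
  have hmono : ‖p x - p y‖ * ‖p x - p y‖ ≤ ‖x - y‖ * ‖p x - p y‖ := by
    refine le_trans ?_ (real_inner_le_norm (x - y) (p x - p y))
    rw [← real_inner_self_eq_norm_mul_norm]
    simp only [inner_sub_left, inner_sub_right] at *
    linarith
  rcases (norm_nonneg (p x - p y)).eq_or_lt with hzero | hpos
  · exact hzero ▸ norm_nonneg _
  · exact le_of_mul_le_mul_right hmono hpos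

/-- The class of losses considered here: differentiable, and on the feasible set `C` moreover
`a`-strongly convex and `B`-Lipschitz. -/
structure StrongConvexLipschitz (C : Set E) (a B : ℝ) (f : E → ℝ) : Prop where
  differentiable : Differentiable ℝ f
  strongConvexOn : StrongConvexOn C a f
  abs_sub_le : ∀ x ∈ C, ∀ y ∈ C, |f x - f y| ≤ B * ‖x - y‖

lemma sum_strongConvexOn {ι : Type*} {s : Finset ι} {f : ι → E → ℝ} {a : ℝ} (hC : Convex ℝ C)
    (hf : ∀ i ∈ s, StrongConvexOn C a (f i)) :
    StrongConvexOn C (s.card * a) (fun x => ∑ i ∈ s, f i x) := by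
  rw [strongConvexOn_iff_convex]
  have hsum : ConvexOn ℝ C (∑ i ∈ s, fun x => f i x - a / 2 * ‖x‖ ^ 2) :=
    Finset.sum_induction _ (ConvexOn ℝ C) (fun _ _ => ConvexOn.add) (convexOn_const 0 hC)
      fun i hi => strongConvexOn_iff_convex.1 (hf i hi)
  refine hsum.congr fun x _ => ?_
  simp only [Finset.sum_apply, Finset.sum_sub_distrib, Finset.sum_const, nsmul_eq_mul]
  ring

lemma StrongConvexLipschitz.sum {ι : Type*} {s : Finset ι} {f : ι → E → ℝ} {a B : ℝ}
    (hC : Convex ℝ C) (hf : ∀ i ∈ s, StrongConvexLipschitz C a B (f i)) :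
    StrongConvexLipschitz C (s.card * a) (s.card * B) (fun x => ∑ i ∈ s, f i x) where
  differentiable := Differentiable.fun_sum fun i hi => (hf i hi).differentiable
  strongConvexOn := sum_strongConvexOn hC fun i hi => (hf i hi).strongConvexOn
  abs_sub_le x hx y hy := by
    rw [mul_assoc]
    exact abs_sum_sub_sum_le fun i hi => (hf i hi).abs_sub_le x hx y hy

-- At the midpoint, strong convexity gains `a ‖x - y‖² / 8` while Lipschitz continuity allows
-- a decrease of at most `B ‖x - y‖ / 2`.
lemma StrongConvexLipschitz.norm_sub_le {f : E → ℝ} {a B : ℝ} (ha : 0 < a) (hC : Convex ℝ C)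
    (hf : StrongConvexLipschitz C a B f) {x y : E} (hx : x ∈ C) (hy : y ∈ C) :
    ‖x - y‖ ≤ 4 * |B| / a := by
  have hhalf : (0 : ℝ) ≤ 1 / 2 := by norm_num
  have hmid := hC hx hy hhalf hhalf (by norm_num)
  have hconv := hf.strongConvexOn.2 hx hy hhalf hhalf (by norm_num)
  have hlipx := (abs_le.1 (hf.abs_sub_le x hx _ hmid)).2
  have hlipy := (abs_le.1 (hf.abs_sub_le y hy _ hmid)).2
  have hdistx : ‖x - ((1 / 2 : ℝ) • x + (1 / 2 : ℝ) • y)‖ = 1 / 2 * ‖x - y‖ := by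
    rw [show x - ((1 / 2 : ℝ) • x + (1 / 2 : ℝ) • y) = (1 / 2 : ℝ) • (x - y) by module,
      norm_smul, Real.norm_of_nonneg hhalf]
  have hdisty : ‖y - ((1 / 2 : ℝ) • x + (1 / 2 : ℝ) • y)‖ = 1 / 2 * ‖x - y‖ := by
    rw [show y - ((1 / 2 : ℝ) • x + (1 / 2 : ℝ) • y) = (1 / 2 : ℝ) • (y - x) by module,
      norm_smul, Real.norm_of_nonneg hhalf, norm_sub_rev]
  rw [hdistx] at hlipx
  rw [hdisty] at hlipy
  simp only [smul_eq_mul] at hconv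
  have hsq : ‖x - y‖ * a * ‖x - y‖ ≤ 4 * B * ‖x - y‖ := by linarith
  rcases (norm_nonneg (x - y)).eq_or_lt with hzero | hpos
  · rw [← hzero]
    positivity
  · rw [le_div_iff₀ ha]
    exact (le_of_mul_le_mul_right hsq hpos).trans (by gcongr; exact le_abs_self B)

variable [CompleteSpace E] {f : E → ℝ} {g x y : E} {a B : ℝ}

lemma tendsto_slope_of_hasGradientAt (hg : HasGradientAt f g x) (v : E) :
    Tendsto (fun s : ℝ => s⁻¹ * (f (x + s • v) - f x)) (𝓝[>] 0) (𝓝 (inner ℝ g v)) := by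
  simpa using (hg.hasFDerivAt.hasLineDerivAt v).tendsto_slope_zero_right

lemma add_inner_add_sq_le_of_strongConvexOn (hf : StrongConvexOn C a f)
    (hg : HasGradientAt f g x) (hx : x ∈ C) (hy : y ∈ C) :
    f x + inner ℝ g (y - x) + a / 2 * ‖x - y‖ ^ 2 ≤ f y := by
  have hsecant : ∀ s ∈ Set.Ioo (0 : ℝ) 1, s⁻¹ * (f (x + s • (y - x)) - f x)
      ≤ f y - f x - (1 - s) * (a / 2 * ‖x - y‖ ^ 2) := by
    intro s hs
    have hconv := hf.2 hx hy (sub_nonneg.2 hs.2.le) hs.1.le (sub_add_cancel 1 s)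
    have hpoint : x + s • (y - x) = (1 - s) • x + s • y := by module
    rw [hpoint, inv_mul_eq_div, div_le_iff₀ hs.1]
    simp only [smul_eq_mul] at hconv
    linarith
  have hlim : Tendsto (fun s : ℝ => f y - f x - (1 - s) * (a / 2 * ‖x - y‖ ^ 2)) (𝓝[>] 0)
      (𝓝 (f y - f x - (1 - 0) * (a / 2 * ‖x - y‖ ^ 2))) :=
    (Continuous.tendsto (by fun_prop) 0).mono_left nhdsWithin_le_nhds
  have hle := le_of_tendsto_of_tendsto (tendsto_slope_of_hasGradientAt hg (y - x)) hlim
    (Filter.eventually_of_mem (Ioo_mem_nhdsGT one_pos) hsecant)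
  linarith

lemma inner_sub_le_of_abs_sub_le (hC : Convex ℝ C)
    (hf : ∀ z ∈ C, |f x - f z| ≤ B * ‖x - z‖) (hg : HasGradientAt f g x)
    (hx : x ∈ C) (hy : y ∈ C) : inner ℝ g (x - y) ≤ B * ‖x - y‖ := by
  have hsecant : ∀ s ∈ Set.Ioo (0 : ℝ) 1,
      -(B * ‖x - y‖) ≤ s⁻¹ * (f (x + s • (y - x)) - f x) := by
    intro s hs
    have hdist : ‖x - (x + s • (y - x))‖ = s * ‖x - y‖ := by
      rw [sub_add_cancel_left, norm_neg, norm_smul, Real.norm_of_nonneg hs.1.le, norm_sub_rev]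
    have hlip := (abs_le.1 (hf _ (hC.add_smul_sub_mem hx hy ⟨hs.1.le, hs.2.le⟩))).2
    rw [hdist] at hlip
    rw [inv_mul_eq_div, le_div_iff₀ hs.1]
    linarith
  have hge := ge_of_tendsto (tendsto_slope_of_hasGradientAt hg (y - x))
    (Filter.eventually_of_mem (Ioo_mem_nhdsGT one_pos) hsecant)
  rw [← neg_sub x y, inner_neg_right] at hge
  linarith

lemma StrongConvexLipschitz.projected_step (hp : IsMetricProj C p) (hC : Convex ℝ C)
    (hf : StrongConvexLipschitz C a B f) (ha : 0 < a) (hx : x ∈ C) (hy : y ∈ C) {t : ℝ}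
    (ht : 0 ≤ t) (v : E) :
    f x - f y ≤ a * t / 2 * ‖x - y‖ ^ 2
      - a * (t + 1) / 2 * ‖p (x - (1 / (a * (t + 1))) • (gradient f x + v)) - y‖ ^ 2
      + (B ^ 2 + ‖v‖ ^ 2) / a * (1 / (t + 1)) + inner ℝ v (y - x) := by
  have hg := (hf.differentiable x).hasGradientAt
  set g := gradient f x
  set q := 1 / (a * (t + 1)) with hq
  set z := x - q • (g + v) with hz
  have hq₀ : 0 < q := by positivity
  have hproj := hp.inner_sub_sub_nonpos hC z hy
  have hgrad := inner_sub_le_of_abs_sub_le hC (hf.abs_sub_le x hx) hg hx (hp.mem z)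
  have hnoise := real_inner_le_norm v (x - p z)
  have hconv := add_inner_add_sq_le_of_strongConvexOn hf.strongConvexOn hg hx hy
  have hexpand : inner ℝ (z - p z) (y - p z)
      = 1 / 2 * (‖x - p z‖ ^ 2 + ‖p z - y‖ ^ 2 - ‖x - y‖ ^ 2)
        - q * inner ℝ g (y - x) - q * inner ℝ g (x - p z)
        - q * inner ℝ v (y - x) - q * inner ℝ v (x - p z) := by
    simp only [← real_inner_self_eq_norm_sq]
    nth_rw 1 [hz]
    simp only [inner_sub_left, inner_sub_right, inner_add_left, inner_smul_left]
    simp only [real_inner_comm x y, real_inner_comm x (p z), real_inner_comm y (p z), conj_trivial]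
    ring
  have hyoung : q * ((B + ‖v‖) * ‖x - p z‖)
      ≤ 1 / 2 * ‖x - p z‖ ^ 2 + q ^ 2 * (B ^ 2 + ‖v‖ ^ 2) := by
    nlinarith [sq_nonneg (‖x - p z‖ - q * (B + ‖v‖)), sq_nonneg (q * (B - ‖v‖))]
  have hscaled : q * (f x - f y) ≤ 1 / 2 * ‖x - y‖ ^ 2 - 1 / 2 * ‖p z - y‖ ^ 2
      + q ^ 2 * (B ^ 2 + ‖v‖ ^ 2) + q * inner ℝ v (y - x) - q * (a / 2 * ‖x - y‖ ^ 2) := by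
    linear_combination hproj - hexpand + hyoung + q * hgrad + q * hnoise + q * hconv
  refine le_of_mul_le_mul_left (hscaled.trans_eq ?_) hq₀
  rw [hq]
  field_simp
  ring

variable {Ω : Type*}

/-- The process `x` is a run of `T` steps of noisy projected gradient descent on `f`, with gradient
noise `ν` and the step sizes `1 / (a (t + 1))` suited to an `a`-strongly convex `f`. Steps are
counted from `0`, and `x t` is unconstrained for `t > T`. -/
def IsNoisyPGD (p : E → E) (f : E → ℝ) (a : ℝ) {T : ℕ} (ν : Fin T → Ω → E) (x : ℕ → Ω → E) :
    Prop :=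
  ∀ t : Fin T, x ((t : ℕ) + 1) = fun ω =>
    p (x t ω - (1 / (a * ((t : ℕ) + 1 : ℝ))) • (gradient f (x t ω) + ν t ω))

lemma IsNoisyPGD.mem {T : ℕ} {ν : Fin T → Ω → E} {x : ℕ → Ω → E} (hx : IsNoisyPGD p f a ν x)
    (hp : IsMetricProj C p) (h₀ : ∀ ω, x 0 ω ∈ C) {t : ℕ} (ht : t ≤ T) (ω : Ω) : x t ω ∈ C := by
  cases t with
  | zero => exact h₀ ω
  | succ t =>
    rw [hx ⟨t, ht⟩]
    exact hp.mem _

end ProjectedGradient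

section Expectation

variable {E : Type*} [NormedAddCommGroup E] [InnerProductSpace ℝ E] {C : Set E} {p : E → E}
  {f : E → ℝ} {a B v : ℝ} {Ω : Type*} {mΩ : MeasurableSpace Ω} {P : Measure Ω}

lemma integrable_inner_of_memLp_two {X Y : Ω → E} (hX : MemLp X 2 P) (hY : MemLp Y 2 P) :
    Integrable (fun ω => inner ℝ (X ω) (Y ω)) P := by
  refine memLp_one_iff_integrable.1 (hX.of_bilin (inner ℝ) 1 hY (hX.1.inner hY.1) ?_)
  refine Filter.Eventually.of_forall fun ω => ?_
  rw [one_mul]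
  exact nnnorm_inner_le_nnnorm _ _

variable [MeasurableSpace E] [BorelSpace E]

lemma measurable_gradient [CompleteSpace E] (f : E → ℝ) : Measurable (gradient f) :=
  (InnerProductSpace.toDual ℝ E).symm.continuous.measurable.comp (measurable_fderiv ℝ f)

lemma integral_inner_sub_eq_zero [CompleteSpace E] [IsFiniteMeasure P]
    {N X Y : Ω → E} (hN2 : MemLp N 2 P) (hN0 : ∫ ω, N ω ∂P = 0)
    (hNY : IndepFun N Y P) (hNX : IndepFun N X P) (hY : MemLp Y 2 P) (hX : MemLp X 2 P) :
    ∫ ω, inner ℝ (N ω) (Y ω - X ω) ∂P = 0 := by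
  have hN := hN2.integrable one_le_two
  have hzero : ∀ Z : Ω → E, IndepFun N Z P → MemLp Z 2 P → ∫ ω, inner ℝ (N ω) (Z ω) ∂P = 0 :=
    fun Z hNZ hZ => by
      simpa [hN0, innerSL_apply_apply ℝ] using
        hNZ.integral_bilin hN (hZ.integrable one_le_two) (innerSL ℝ)
  simp only [inner_sub_right]
  rw [integral_sub (integrable_inner_of_memLp_two hN2 hY) (integrable_inner_of_memLp_two hN2 hX),
    hzero Y hNY hY, hzero X hNX hX, sub_zero]

variable [SecondCountableTopology E]

lemma StrongConvexLipschitz.memLp_sub [IsFiniteMeasure P] (hf : StrongConvexLipschitz C a B f)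
    (ha : 0 < a) (hC : Convex ℝ C) {X Y : Ω → E} (hX : Measurable X) (hXC : ∀ ω, X ω ∈ C)
    (hY : Measurable Y) (hYC : ∀ ω, Y ω ∈ C) : MemLp (fun ω => X ω - Y ω) 2 P :=
  MemLp.of_bound (hX.sub hY).aestronglyMeasurable (4 * |B| / a)
    (Filter.Eventually.of_forall fun ω => hf.norm_sub_le ha hC (hXC ω) (hYC ω))

lemma StrongConvexLipschitz.memLp [IsFiniteMeasure P] (hf : StrongConvexLipschitz C a B f)
    (ha : 0 < a) (hC : Convex ℝ C) {X : Ω → E} (hX : Measurable X) (hXC : ∀ ω, X ω ∈ C) :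
    MemLp X 2 P := by
  rcases isEmpty_or_nonempty Ω with _ | ⟨⟨ω₀⟩⟩
  · exact MemLp.of_bound hX.aestronglyMeasurable 0 (Filter.Eventually.of_forall isEmptyElim)
  · have hsub := hf.memLp_sub (P := P) ha hC hX hXC measurable_const fun _ => hXC ω₀
    exact (hsub.add (memLp_const (X ω₀))).congr_norm hX.aestronglyMeasurable (by simp)

lemma StrongConvexLipschitz.integrable_comp [IsFiniteMeasure P]
    (hf : StrongConvexLipschitz C a B f) (ha : 0 < a) (hC : Convex ℝ C) {X : Ω → E}
    (hX : Measurable X) (hXC : ∀ ω, X ω ∈ C) : Integrable (fun ω => f (X ω)) P := by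
  rcases isEmpty_or_nonempty Ω with _ | ⟨⟨ω₀⟩⟩
  · exact Integrable.of_isEmpty
  have hdom : Integrable (fun ω => B * ‖X ω - X ω₀‖ + |f (X ω₀)|) P :=
    (((hf.memLp_sub ha hC hX hXC measurable_const fun _ => hXC ω₀).integrable
      one_le_two).norm.const_mul B).add (integrable_const _)
  refine hdom.mono' (hf.differentiable.continuous.measurable.comp hX).aestronglyMeasurable
    (Filter.Eventually.of_forall fun ω => ?_)
  have htri := abs_sub_abs_le_abs_sub (f (X ω)) (f (X ω₀))
  rw [Real.norm_eq_abs]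
  linarith [hf.abs_sub_le _ (hXC ω) _ (hXC ω₀)]

variable [CompleteSpace E] {T : ℕ} {ν : Fin T → Ω → E} {x : ℕ → Ω → E} {c : E}

lemma IsNoisyPGD.measurable (hx : IsNoisyPGD p f a ν x) (hp : Continuous p)
    (h₀ : Measurable (x 0)) {t : ℕ} (ht : t ≤ T)
    (hν : ∀ r : Fin T, (r : ℕ) < t → Measurable (ν r)) : Measurable (x t) := by
  induction t with
  | zero => exact h₀
  | succ t ih =>
    have hxt := ih (by lia) fun r hr => hν r (by lia)
    rw [hx ⟨t, ht⟩]
    exact hp.measurable.comp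
      (hxt.sub ((((measurable_gradient f).comp hxt).add (hν ⟨t, ht⟩ t.lt_succ_self)).const_smul _))

lemma IsNoisyPGD.indepFun (hx : IsNoisyPGD p f a ν x) (hp : Continuous p) (h₀ : x 0 = fun _ => c)
    (hν : iIndepFun ν P) (hνm : ∀ t, Measurable (ν t)) {t : Fin T} {s : ℕ} (hs : s ≤ t) :
    IndepFun (ν t) (x s) P := by
  set past : MeasurableSpace Ω :=
    ⨆ r ∈ {r : Fin T | (r : ℕ) < s}, MeasurableSpace.comap (ν r) inferInstance
  have hxs : Measurable[past] (x s) :=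
    hx.measurable hp (h₀ ▸ measurable_const) (by lia) fun r hr =>
      measurable_iff_comap_le.2 (le_iSup₂
        (f := fun (r : Fin T) (_ : r ∈ {r : Fin T | (r : ℕ) < s}) =>
          MeasurableSpace.comap (ν r) inferInstance) r hr)
  have hdisj : Disjoint {t} {r : Fin T | (r : ℕ) < s} :=
    Set.disjoint_singleton_left.2 (by simpa using hs)
  have hindep := indep_iSup_of_disjoint (fun r => (hνm r).comap_le) hν hdisj
  rw [iSup_singleton] at hindep
  exact (IndepFun_iff_Indep _ _ _).2
    (indep_of_indep_of_le_right hindep (measurable_iff_comap_le.1 hxs))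

section ProbabilityMeasure

variable [IsProbabilityMeasure P]

lemma StrongConvexLipschitz.integral_projected_step (hf : StrongConvexLipschitz C a B f)
    (ha : 0 < a) (hC : Convex ℝ C) (hp : IsMetricProj C p) {X Y N : Ω → E} (hX : Measurable X)
    (hXC : ∀ ω, X ω ∈ C) (hY : Measurable Y) (hYC : ∀ ω, Y ω ∈ C) (hN : Measurable N)
    (hN2 : MemLp N 2 P) (hv : ∫ ω, ‖N ω‖ ^ 2 ∂P ≤ v)
    (horth : ∫ ω, inner ℝ (N ω) (Y ω - X ω) ∂P = 0) {t : ℝ} (ht : 0 ≤ t) :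
    ∫ ω, f (X ω) ∂P - ∫ ω, f (Y ω) ∂P ≤ a * t / 2 * ∫ ω, ‖X ω - Y ω‖ ^ 2 ∂P
      - a * (t + 1) / 2
        * ∫ ω, ‖p (X ω - (1 / (a * (t + 1))) • (gradient f (X ω) + N ω)) - Y ω‖ ^ 2 ∂P
      + (B ^ 2 + v) / a * (1 / (t + 1)) := by
  set Z : Ω → E := fun ω => p (X ω - (1 / (a * (t + 1))) • (gradient f (X ω) + N ω))
  have hZ : Measurable Z := (hp.lipschitzWith_one hC).continuous.measurable.comp
    (hX.sub ((((measurable_gradient f).comp hX).add hN).const_smul _))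
  have hiX := hf.integrable_comp (P := P) ha hC hX hXC
  have hiY := hf.integrable_comp (P := P) ha hC hY hYC
  have hiXY := (hf.memLp_sub (P := P) ha hC hX hXC hY hYC).integrable_norm_pow two_ne_zero
  have hiZY := (hf.memLp_sub (P := P) ha hC hZ (fun _ => hp.mem _) hY hYC).integrable_norm_pow
    two_ne_zero
  have hiN := hN2.integrable_norm_pow two_ne_zero
  have hiNXY := integrable_inner_of_memLp_two hN2 (hf.memLp_sub ha hC hY hYC hX hXC)
  have hmono : ∫ ω, (f (X ω) - f (Y ω)) ∂P ≤ ∫ ω, (a * t / 2 * ‖X ω - Y ω‖ ^ 2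
      - a * (t + 1) / 2 * ‖Z ω - Y ω‖ ^ 2
      + (B ^ 2 + ‖N ω‖ ^ 2) / a * (1 / (t + 1)) + inner ℝ (N ω) (Y ω - X ω)) ∂P :=
    integral_mono (hiX.sub hiY) (by fun_prop)
      fun ω => hf.projected_step hp hC ha (hXC ω) (hYC ω) ht (N ω)
  rw [integral_sub hiX hiY, integral_add (by fun_prop) hiNXY,
    integral_add (by fun_prop) (by fun_prop), integral_sub (by fun_prop) (by fun_prop),
    integral_const_mul, integral_const_mul, integral_mul_const, integral_div,
    integral_add (by fun_prop) hiN, integral_const, horth] at hmono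
  simp only [probReal_univ, smul_eq_mul, one_mul, add_zero] at hmono
  refine hmono.trans ?_
  gcongr

lemma StrongConvexLipschitz.integral_sub_le (hf : StrongConvexLipschitz C a B f)
    (ha : 0 < a) (hC : Convex ℝ C) (hp : IsMetricProj C p) {X Y : Ω → E} (hX : Measurable X)
    (hXC : ∀ ω, X ω ∈ C) (hY : Measurable Y) (hYC : ∀ ω, Y ω ∈ C) (hv : 0 ≤ v) {t : ℝ}
    (ht : 0 ≤ t) :
    ∫ ω, f (X ω) ∂P - ∫ ω, f (Y ω) ∂P
      ≤ a * t / 2 * ∫ ω, ‖X ω - Y ω‖ ^ 2 ∂P + (B ^ 2 + v) / a * (1 / (t + 1)) := by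
  have hstep := hf.integral_projected_step (P := P) ha hC hp hX hXC hY hYC measurable_const
    (memLp_const 0) (by simpa using hv) (by simp) ht
  have hnext : 0 ≤ a * (t + 1) / 2
      * ∫ ω, ‖p (X ω - (1 / (a * (t + 1))) • (gradient f (X ω) + 0)) - Y ω‖ ^ 2 ∂P := by positivity
  linarith

lemma IsNoisyPGD.sum_integral_sub_le (hx : IsNoisyPGD p f a ν x)
    (hf : StrongConvexLipschitz C a B f) (ha : 0 < a) (hC : Convex ℝ C)
    (hp : IsMetricProj C p) (h₀ : Measurable (x 0))
    (h₀C : ∀ ω, x 0 ω ∈ C) (hνm : ∀ t, Measurable (ν t)) (hν2 : ∀ t, MemLp (ν t) 2 P)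
    (hv₀ : 0 ≤ v) (hv : ∀ t, ∫ ω, ‖ν t ω‖ ^ 2 ∂P ≤ v) {Y : Ω → E} (hY : Measurable Y)
    (hYC : ∀ ω, Y ω ∈ C) {s : ℕ} (hs : s ≤ T)
    (horth : ∀ t : Fin T, s ≤ t → ∫ ω, inner ℝ (ν t ω) (Y ω - x t ω) ∂P = 0) :
    ∑ t ∈ Finset.Ico s (T + 1), (∫ ω, f (x t ω) ∂P - ∫ ω, f (Y ω) ∂P)
      ≤ a * s / 2 * ∫ ω, ‖x s ω - Y ω‖ ^ 2 ∂P
        + (B ^ 2 + v) / a * ∑ t ∈ Finset.Ico s (T + 1), 1 / ((t : ℝ) + 1) := by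
  have hxm : ∀ t ≤ T, Measurable (x t) := fun t ht =>
    hx.measurable (hp.lipschitzWith_one hC).continuous h₀ ht fun r _ => hνm r
  have hxC : ∀ t ≤ T, ∀ ω, x t ω ∈ C := fun t ht => hx.mem hp h₀C ht
  refine sum_Ico_le_of_step (D := fun t => ∫ ω, ‖x t ω - Y ω‖ ^ 2 ∂P) hs (fun t hst ht => ?_) ?_
  · rw [hx ⟨t, ht⟩]
    exact hf.integral_projected_step ha hC hp (hxm t ht.le) (hxC t ht.le) hY hYC
      (hνm ⟨t, ht⟩) (hν2 _) (hv _) (horth ⟨t, ht⟩ hst) t.cast_nonneg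
  · exact hf.integral_sub_le ha hC hp (hxm T le_rfl) (hxC T le_rfl) hY hYC hv₀ T.cast_nonneg

end ProbabilityMeasure

theorem IsNoisyPGD.integral_last_sub_le (hx : IsNoisyPGD p f a ν x)
    (hf : StrongConvexLipschitz C a B f) (ha : 0 < a) (hC : Convex ℝ C)
    (hp : IsMetricProj C p) (hc : c ∈ C) (h₀ : x 0 = fun _ => c)
    (hν : iIndepFun ν P) (hνm : ∀ t, Measurable (ν t)) (hν2 : ∀ t, MemLp (ν t) 2 P)
    (hν0 : ∀ t, ∫ ω, ν t ω ∂P = 0) (hv : ∀ t, ∫ ω, ‖ν t ω‖ ^ 2 ∂P ≤ v) (hT : 1 ≤ T) {y : E}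
    (hy : y ∈ C) :
    ∫ ω, f (x T ω) ∂P - f y ≤ 4 * ((B ^ 2 + v) / a) * (1 + Real.log T) / T := by
  have := hν.isProbabilityMeasure
  have h₀m : Measurable (x 0) := h₀ ▸ measurable_const
  have h₀C : ∀ ω, x 0 ω ∈ C := fun ω => by rwa [h₀]
  have hpc := (hp.lipschitzWith_one hC).continuous
  have hxm : ∀ t ≤ T, Measurable (x t) := fun t ht => hx.measurable hpc h₀m ht fun r _ => hνm r
  have hxC : ∀ t ≤ T, ∀ ω, x t ω ∈ C := fun t ht => hx.mem hp h₀C ht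
  have hv₀ : 0 ≤ v := (integral_nonneg fun ω => sq_nonneg ‖ν ⟨0, hT⟩ ω‖).trans (hv _)
  have horth : ∀ (t : Fin T) (Y : Ω → E), IndepFun (ν t) Y P → Measurable Y → (∀ ω, Y ω ∈ C) →
      ∫ ω, inner ℝ (ν t ω) (Y ω - x t ω) ∂P = 0 := fun t Y hindep hY hYC =>
    integral_inner_sub_eq_zero (hν2 t) (hν0 t) hindep (hx.indepFun hpc h₀ hν hνm le_rfl)
      (hf.memLp ha hC hY hYC) (hf.memLp ha hC (hxm t t.2.le) (hxC t t.2.le))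
  have hA : 0 ≤ (B ^ 2 + v) / a := by positivity
  refine last_sub_le_of_sum_Ico_sub_le (a := fun t => ∫ ω, f (x t ω) ∂P) hA hT (fun s hs => ?_) ?_
  · have hsum := hx.sum_integral_sub_le hf ha hC hp h₀m h₀C hνm hν2 hv₀ hv (hxm s hs.le)
      (hxC s hs.le) hs.le fun t hst => horth t _ (hx.indepFun hpc h₀ hν hνm hst) (hxm s hs.le)
        (hxC s hs.le)
    simpa using hsum
  · have hsum := hx.sum_integral_sub_le hf ha hC hp h₀m h₀C hνm hν2 hv₀ hv
      (measurable_const (a := y)) (fun _ => hy) T.zero_le fun t _ => horth t _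
        (indepFun_const_right (ν t) y) measurable_const fun _ => hy
    simpa using hsum

end Expectation

section GaussianVector

variable {Ω : Type*} {mΩ : MeasurableSpace Ω} {P : Measure Ω}

lemma iIndepFun_curry {ι κ β : Type*} [MeasurableSpace β] {X : ι → κ → Ω → β}
    (hXm : ∀ i j, Measurable (X i j)) (hX : iIndepFun (fun (q : ι × κ) ω => X q.1 q.2 ω) P) :
    iIndepFun (fun i ω j => X i j ω) P := by
  have := hX.isProbabilityMeasure
  have : ∀ i j, IsProbabilityMeasure (P.map (X i j)) :=
    fun i j => Measure.isProbabilityMeasure_map (hXm i j).aemeasurable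
  have hsigma : iIndepFun (fun (q : (_ : ι) × κ) ω => X q.1 q.2 ω) P :=
    hX.precomp (Equiv.sigmaEquivProd ι κ).injective
  have hrow : ∀ i, iIndepFun (X i) P :=
    fun i => hX.precomp (g := Prod.mk i) (Prod.mk_right_injective i)
  rw [iIndepFun_iff_map_fun_eq_infinitePi_map (by fun_prop)] at hsigma ⊢
  have hcurry : (MeasurableEquiv.piCurry fun (_ : ι) (_ : κ) => β) ∘ (fun ω q => X q.1 q.2 ω)
      = fun ω i j => X i j ω := rfl
  rw [← hcurry, ← Measure.map_map (by fun_prop) (by fun_prop), hsigma,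
    Measure.infinitePi_map_piCurry (fun i j => P.map (X i j))]
  congr! with i
  exact ((iIndepFun_iff_map_fun_eq_infinitePi_map (hXm i)).1 (hrow i)).symm

variable {κ : Type*}

lemma iIndepFun_of_coord {ι : Type*} {X : ι → Ω → EuclideanSpace ℝ κ}
    (hXm : ∀ i, Measurable (X i)) (hX : iIndepFun (fun (q : ι × κ) ω => X q.1 ω q.2) P) :
    iIndepFun X P :=
  (iIndepFun_curry (X := fun i k ω => X i ω k) (by fun_prop) hX).comp
    (fun _ => WithLp.toLp 2) fun _ => by fun_prop

lemma memLp_two_of_hasLaw_gaussianReal {Y : Ω → ℝ} {μ : ℝ} {v : NNReal}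
    (hY : HasLaw Y (gaussianReal μ v) P) : MemLp Y 2 P := by
  have hid := memLp_id_gaussianReal (μ := μ) (v := v) 2
  rw [← hY.map_eq] at hid
  exact (memLp_map_measure_iff hid.1 hY.aemeasurable).1 hid

variable [Fintype κ] {X : Ω → EuclideanSpace ℝ κ}

lemma integral_eq_zero_of_gaussian_coord
    (hX : ∀ k, HasLaw (fun ω => X ω k) (gaussianReal 0 1) P) : ∫ ω, X ω ∂P = 0 := by
  ext k
  have := (hX k).isProbabilityMeasure
  rw [eval_integral_piLp fun k => (memLp_two_of_hasLaw_gaussianReal (hX k)).integrable one_le_two,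
    (hX k).integral_eq, integral_id_gaussianReal]
  rfl

lemma integral_norm_sq_of_gaussian_coord
    (hX : ∀ k, HasLaw (fun ω => X ω k) (gaussianReal 0 1) P) :
    ∫ ω, ‖X ω‖ ^ 2 ∂P = Fintype.card κ := by
  have hcoord : ∀ k, ∫ ω, X ω k ^ 2 ∂P = 1 := fun k => by
    rw [← variance_of_integral_eq_zero (hX k).aemeasurable, (hX k).variance_eq]
    · simp
    · rw [(hX k).integral_eq, integral_id_gaussianReal]
  simp only [EuclideanSpace.real_norm_sq_eq]
  rw [integral_finsetSum _ fun k _ => (memLp_two_of_hasLaw_gaussianReal (hX k)).integrable_sq]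
  simp [hcoord]

end GaussianVector

section TaskWeights

variable {E : Type*} [NormedAddCommGroup E] [InnerProductSpace ℝ E] [CompleteSpace E]
  [MeasurableSpace E] [BorelSpace E] [SecondCountableTopology E] {C : Set E} {proj : E → E}
  {lam Γ v : ℝ} {T : ℕ} {Ω : Type*} {mΩ : MeasurableSpace Ω} {P : Measure Ω}

lemma excess_risk_le_of_task_weight {f : E → ℝ} {N w : ℝ} {ξ : Fin T → Ω → E} {x : ℕ → Ω → E}
    {c y : E} (hN : 0 < N) (hlam : 0 < lam) (hw : w ≠ 0) (hT : 1 ≤ T) (hC : Convex ℝ C)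
    (hproj : IsMetricProj C proj) (hf : StrongConvexLipschitz C (N * lam) (N * Γ) f)
    (hc : c ∈ C) (h₀ : x 0 = fun _ => c)
    (hx : ∀ t : Fin T, x ((t : ℕ) + 1) = fun ω => proj (x t ω -
      (1 / (w * N * lam * ((t : ℕ) + 1))) •
        (w • gradient f (x t ω) + (Γ * √(T / 2)) • ξ t ω)))
    (hξ : iIndepFun ξ P) (hξm : ∀ t, Measurable (ξ t)) (hξ2 : ∀ t, MemLp (ξ t) 2 P)
    (hξ0 : ∀ t, ∫ ω, ξ t ω ∂P = 0) (hv : ∀ t, ∫ ω, ‖ξ t ω‖ ^ 2 ∂P ≤ v) (hy : y ∈ C) :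
    ∫ ω, f (x T ω) ∂P - f y
      ≤ 4 * (Γ ^ 2 / lam) * (1 + Real.log T) * (N / T + v / 2 * (1 / (w ^ 2 * N))) := by
  set κ : ℝ := Γ * √(T / 2) / w with hκ
  have hκsq : κ ^ 2 = Γ ^ 2 * (T / 2) / w ^ 2 := by
    rw [hκ, div_pow, mul_pow, Real.sq_sqrt (by positivity)]
  have hrun : IsNoisyPGD proj f (N * lam) (fun t ω => κ • ξ t ω) x := by
    intro t
    rw [hx t]
    ext ω
    congr 2
    rw [smul_add, smul_add, smul_smul, smul_smul, smul_smul, hκ]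
    congr 2 <;> field_simp
  have hbound := hrun.integral_last_sub_le hf (by positivity) hC hproj hc h₀
    (hξ.comp (fun _ => (κ • ·)) fun _ => measurable_const_smul κ)
    (fun t => (hξm t).const_smul κ) (fun t => (hξ2 t).const_smul κ)
    (fun t => by rw [integral_smul, hξ0, smul_zero]) (v := κ ^ 2 * v) (fun t => ?_) hT hy
  · refine hbound.trans_eq ?_
    have hT₀ : (T : ℝ) ≠ 0 := by positivity
    rw [hκsq]
    field_simp
  · simp only [norm_smul, mul_pow, Real.norm_eq_abs, sq_abs]
    rw [integral_const_mul]
    gcongr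
    exact hv t

theorem stmt9_general {ι : Type*} [Fintype ι] {n : ι → ℕ} (hn : ∀ i, 1 ≤ n i) (hlam : 0 < lam)
    (hv₀ : 0 < v) (hC : Convex ℝ C) {ℓ : (i : ι) → Fin (n i) → E → ℝ}
    (hℓ : ∀ i j, StrongConvexLipschitz C lam Γ (ℓ i j)) {y : ι → E} (hy : ∀ i, y i ∈ C)
    {w : ι → ℝ} (hw : ∀ i, w i ≠ 0)
    (hT : (2 / v) * (∑ i, (n i : ℝ)) / (∑ i, 1 / (w i ^ 2 * (n i : ℝ))) ≤ T)
    {ξ : ι → Fin T → Ω → E} (hξ : ∀ i, iIndepFun (ξ i) P) (hξm : ∀ i t, Measurable (ξ i t))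
    (hξ2 : ∀ i t, MemLp (ξ i t) 2 P) (hξ0 : ∀ i t, ∫ ω, ξ i t ω ∂P = 0)
    (hv : ∀ i t, ∫ ω, ‖ξ i t ω‖ ^ 2 ∂P ≤ v) (hproj : IsMetricProj C proj)
    {θ : ι → ℕ → Ω → E} (hθ₀ : ∀ i, ∃ c ∈ C, θ i 0 = fun _ => c)
    (hθ : ∀ i, ∀ t : ℕ, (ht : t < T) → θ i (t + 1) = fun ω => proj (θ i t ω -
      (1 / (w i * (n i : ℝ) * lam * (t + 1))) •
        (w i • gradient (fun x => ∑ j, ℓ i j x) (θ i t ω) + (Γ * √(T / 2)) • ξ i ⟨t, ht⟩ ω))) :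
    (∑ i, ∫ ω, (∑ j, ℓ i j (θ i T ω)) ∂P) - (∑ i, ∑ j, ℓ i j (y i))
      ≤ 4 * (Γ ^ 2 / lam) * v * (1 + Real.log T) * ∑ i, 1 / (w i ^ 2 * (n i : ℝ)) := by
  have hn₀ : ∀ i, (0 : ℝ) < n i := fun i => by exact_mod_cast hn i
  have hweight : ∀ i, 0 < 1 / (w i ^ 2 * (n i : ℝ)) := fun i => by
    have := hn₀ i
    have := hw i
    positivity
  rcases isEmpty_or_nonempty ι with _ | _
  · simp
  set S : ℝ := ∑ i, 1 / (w i ^ 2 * (n i : ℝ)) with hS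
  have hS₀ : 0 < S := Finset.sum_pos (fun i _ => hweight i) Finset.univ_nonempty
  have hn_sum : 0 < ∑ i, (n i : ℝ) := Finset.sum_pos (fun i _ => hn₀ i) Finset.univ_nonempty
  have hT₀ : (0 : ℝ) < T := lt_of_lt_of_le (by positivity) hT
  have hbalance : (∑ i, (n i : ℝ)) / T ≤ v / 2 * S := by
    rw [div_le_iff₀ hS₀] at hT
    rw [div_le_iff₀ hT₀]
    calc ∑ i, (n i : ℝ) = v / 2 * (2 / v * ∑ i, (n i : ℝ)) := by field_simp
      _ ≤ v / 2 * (T * S) := by gcongr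
      _ = v / 2 * S * T := by ring
  have htask : ∀ i, ∫ ω, (∑ j, ℓ i j (θ i T ω)) ∂P - ∑ j, ℓ i j (y i)
      ≤ 4 * (Γ ^ 2 / lam) * (1 + Real.log T)
        * (n i / T + v / 2 * (1 / (w i ^ 2 * (n i : ℝ)))) := by
    intro i
    obtain ⟨c, hc, h₀⟩ := hθ₀ i
    have hf : StrongConvexLipschitz C (n i * lam) (n i * Γ) (fun x => ∑ j, ℓ i j x) := by
      simpa using StrongConvexLipschitz.sum (s := Finset.univ) hC fun j _ => hℓ i j
    exact excess_risk_le_of_task_weight (hn₀ i) hlam (hw i) (by exact_mod_cast hT₀) hC hproj hf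
      hc h₀ (fun t => hθ i t t.2) (hξ i) (hξm i) (hξ2 i) (hξ0 i) (hv i) (hy i)
  rw [← Finset.sum_sub_distrib]
  calc _ ≤ ∑ i, 4 * (Γ ^ 2 / lam) * (1 + Real.log T)
        * (n i / T + v / 2 * (1 / (w i ^ 2 * (n i : ℝ)))) := Finset.sum_le_sum fun i _ => htask i
    _ = 4 * (Γ ^ 2 / lam) * (1 + Real.log T) * ((∑ i, (n i : ℝ)) / T + v / 2 * S) := by
        rw [← Finset.mul_sum, Finset.sum_add_distrib, ← Finset.sum_div, ← Finset.mul_sum]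
    _ ≤ 4 * (Γ ^ 2 / lam) * (1 + Real.log T) * (v / 2 * S + v / 2 * S) := by gcongr
    _ = 4 * (Γ ^ 2 / lam) * v * (1 + Real.log T) * S := by ring

end TaskWeights

/-- Utility of task-weighted noisy gradient descent, strongly convex case (Theorem 4(b)):
there is a universal constant `K > 0` such that, with per-example losses `ℓ i j`
differentiable, `λ`-strongly convex (i.e. `ℓ i j - (λ/2)‖·‖²` is convex) and `Γ`-Lipschitz
on a compact convex `C`, task objectives `L i = ∑ j, ℓ i j` minimized over `C` at `θ* i`,
positive task weights `w i`, `T = ⌈(2/d) (∑ i, nᵢ)/(∑ i, 1/(wᵢ² nᵢ))⌉`, independent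
standard Gaussian noise vectors `ξ i t`, and the noisy projected GD iterates with step
sizes `η i t = 1/(wᵢ nᵢ λ t)`, the total excess empirical risk of the final iterates is
at most `K (Γ²/λ) d (1 + log T) ∑ i, 1/(wᵢ² nᵢ)`. -/
theorem stmt9 :
    ∃ K : ℝ, 0 < K ∧
      ∀ (d m : ℕ), 1 ≤ d → 1 ≤ m →
      ∀ nn : Fin m → ℕ, (∀ i, 1 ≤ nn i) →
      ∀ Γ lam : ℝ, 0 < Γ → 0 < lam →
      ∀ C : Set (EuclideanSpace ℝ (Fin d)), C.Nonempty → IsCompact C → Convex ℝ C →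
      ∀ ℓ : (i : Fin m) → Fin (nn i) → EuclideanSpace ℝ (Fin d) → ℝ,
        (∀ i j, Differentiable ℝ (ℓ i j)) →
        (∀ i j, ConvexOn ℝ Set.univ (fun x => ℓ i j x - lam / 2 * ‖x‖ ^ 2)) →
        (∀ i j, ∀ x ∈ C, ∀ y ∈ C, |ℓ i j x - ℓ i j y| ≤ Γ * ‖x - y‖) →
      ∀ θstar : Fin m → EuclideanSpace ℝ (Fin d),
        (∀ i, θstar i ∈ C) → (∀ i, ∀ y ∈ C, (∑ j, ℓ i j (θstar i)) ≤ ∑ j, ℓ i j y) →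
      ∀ w : Fin m → ℝ, (∀ i, 0 < w i) →
      ∀ T : ℕ,
        T = ⌈(2 / (d : ℝ)) * (∑ i, (nn i : ℝ)) / (∑ i, 1 / (w i ^ 2 * (nn i : ℝ)))⌉₊ →
      ∀ (Ω : Type) (_ : MeasureSpace Ω), IsProbabilityMeasure (ℙ : Measure Ω) →
      ∀ ξ : Fin m → Fin T → Ω → EuclideanSpace ℝ (Fin d),
        (∀ i t, Measurable (ξ i t)) →
        iIndepFun (m := fun _ => (inferInstance : MeasurableSpace ℝ))
          (fun p : (Fin m × Fin T) × Fin d => fun ω => ξ p.1.1 p.1.2 ω p.2) ℙ →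
        (∀ i t k, Measure.map (fun ω => ξ i t ω k) ℙ = gaussianReal 0 1) →
      ∀ proj : EuclideanSpace ℝ (Fin d) → EuclideanSpace ℝ (Fin d),
        (∀ x, proj x ∈ C ∧ ∀ y ∈ C, ‖x - proj x‖ ≤ ‖x - y‖) →
      ∀ θ : Fin m → ℕ → Ω → EuclideanSpace ℝ (Fin d),
        (∀ i, ∃ θ0 ∈ C, θ i 0 = fun _ => θ0) →
        (∀ i, ∀ t : ℕ, (ht : t < T) →
          θ i (t + 1) = fun ω =>
            proj (θ i t ω -
              (1 / (w i * (nn i : ℝ) * lam * (t + 1))) •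
                (w i • gradient (fun x => ∑ j, ℓ i j x) (θ i t ω) +
                  (Γ * Real.sqrt (T / 2)) • ξ i ⟨t, ht⟩ ω))) →
      (∑ i, ∫ ω, (∑ j, ℓ i j (θ i T ω)) ∂(ℙ : Measure Ω)) - (∑ i, ∑ j, ℓ i j (θstar i)) ≤
        K * (Γ ^ 2 / lam) * d * (1 + Real.log T) * ∑ i, 1 / (w i ^ 2 * (nn i : ℝ)) := by
  refine ⟨4, by norm_num, fun d m hd _ n hn Γ lam _ hlam C _ _ hC ℓ hdiff hconv hlip
    θstar hθstar _ w hw T hT Ω _ _ ξ hξm hξ hgauss proj hproj θ hθ₀ hθ => ?_⟩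
  have hlaw : ∀ i t k, HasLaw (fun ω => ξ i t ω k) (gaussianReal 0 1) ℙ :=
    fun i t k => ⟨by fun_prop, hgauss i t k⟩
  have hindep : ∀ i, iIndepFun (ξ i) ℙ := fun i =>
    (iIndepFun_of_coord (X := fun q : Fin m × Fin T => ξ q.1 q.2) (fun _ => hξm _ _) hξ).precomp
      (g := Prod.mk i) (Prod.mk_right_injective i)
  exact stmt9_general hn hlam (by exact_mod_cast hd) hC
    (fun i j => ⟨hdiff i j,
      strongConvexOn_iff_convex.2 ((hconv i j).subset C.subset_univ hC), hlip i j⟩)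
    hθstar (fun i => (hw i).ne') (hT ▸ Nat.le_ceil _) hindep hξm
    (fun i t => MemLp.of_eval_piLp fun k => memLp_two_of_hasLaw_gaussianReal (hlaw i t k))
    (fun i t => integral_eq_zero_of_gaussian_coord (hlaw i t))
    (fun i t => by simp [integral_norm_sq_of_gaussian_coord (hlaw i t)]) hproj hθ₀ hθ
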